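/- arXiv:2406.14451 — 4 statements merged into one kernel-verified Lean document; each statement's English description precedes it below -/
import Mathlib

section
/- Let X and Y be measurable spaces, Q a Markov kernel from X to Y, γ : Y → X a measurable map, and R the deterministic kernel from Y to X given by R(·|y) = δ_{γ(y)}. Set K = Q⨟R (a kernel on X) and K' = R⨟Q (a kernel on Y). Let φ be a σ-finite measure on X such that for every x ∈ X, φ is absolutely continuous with respect to the measure A ↦ Σ_{n=0}^∞ 2^{−n} K^n(A|x). Then for every y ∈ Y, the measure φQ on Y is absolutely continuous with respect to the measure A ↦ Σ_{n=0}^∞ 2^{−n} (K')^n(A|y). -/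
open ProbabilityTheory MeasureTheory ENNReal

/-- Iterates of a Markov kernel: `kernelIter K 0` is the identity (Dirac) kernel and
`kernelIter K (n+1) = K ∘ₖ kernelIter K n`. -/
noncomputable def kernelIter {X : Type*} [MeasurableSpace X] (K : Kernel X X) : ℕ → Kernel X X
  | 0 => Kernel.id
  | n + 1 => K ∘ₖ kernelIter K n

/-- The kernelResolvent measure `A ↦ ∑_{n=0}^∞ 2^{-n} K^n(A | x)` of a kernel `K` at the point `x`. -/
noncomputable def kernelResolvent {X : Type*} [MeasurableSpace X] (K : Kernel X X) (x : X) :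
    Measure X :=
  Measure.sum fun n : ℕ => ((2 : ℝ≥0∞)⁻¹ ^ n) • kernelIter K n x

/-!
Iterating `Q ∘ₖ R` a positive number of times amounts to applying `R`, iterating `R ∘ₖ Q`, and
finally applying `Q`. Hence a set that is null for the resolvent of `Q ∘ₖ R` at `y` is, for
`R y`-almost every `x`, null for the resolvent of `R ∘ₖ Q` at `x` followed by `Q`. A single such `x`
at which the resolvent dominates `φ` is enough to conclude.
-/

section

variable {X Y : Type*} [MeasurableSpace X] [MeasurableSpace Y]

theorem kernelIter_comp_succ (Q : Kernel X Y) (R : Kernel Y X) (n : ℕ) :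
    kernelIter (Q ∘ₖ R) (n + 1) = Q ∘ₖ (kernelIter (R ∘ₖ Q) n ∘ₖ R) := by
  induction n with
  | zero => simp only [kernelIter, Kernel.comp_id, Kernel.id_comp]
  | succ n ih => rw [kernelIter, ih]; simp only [kernelIter, Kernel.comp_assoc]

theorem ae_kernelResolvent_iff {K : Kernel X X} {x : X} {p : X → Prop} :
    (∀ᵐ z ∂kernelResolvent K x, p z) ↔ ∀ n, ∀ᵐ z ∂kernelIter K n x, p z := by
  have weight_ne_zero (n : ℕ) : (2 : ℝ≥0∞)⁻¹ ^ n ≠ 0 :=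
    pow_ne_zero n (ENNReal.inv_ne_zero.mpr ofNat_ne_top)
  simp only [kernelResolvent, Measure.ae_sum_iff,
    Measure.ae_ennreal_smul_measure_iff (weight_ne_zero _)]

theorem ae_ae_kernelResolvent_of_ae_kernelResolvent_comp {Q : Kernel X Y} {R : Kernel Y X} {y : Y}
    {p : Y → Prop} (h : ∀ᵐ z ∂kernelResolvent (Q ∘ₖ R) y, p z) :
    ∀ᵐ x ∂(R y), ∀ᵐ w ∂kernelResolvent (R ∘ₖ Q) x, ∀ᵐ z ∂Q w, p z := by
  simp only [ae_kernelResolvent_iff, ae_all_iff]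
  intro n
  have h_iter : ∀ᵐ z ∂(Q ∘ₖ (kernelIter (R ∘ₖ Q) n ∘ₖ R)) y, p z :=
    kernelIter_comp_succ Q R n ▸ ae_kernelResolvent_iff.mp h (n + 1)
  exact Kernel.ae_ae_of_ae_comp (Kernel.ae_ae_of_ae_comp h_iter)

theorem absolutelyContinuous_bind_kernelResolvent_general {Q : Kernel X Y} {R : Kernel Y X}
    {φ : Measure X} {y : Y} (habs : ∃ᶠ x in ae (R y), φ ≪ kernelResolvent (R ∘ₖ Q) x) :
    φ.bind Q ≪ kernelResolvent (Q ∘ₖ R) y := by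
  refine Measure.AbsolutelyContinuous.mk fun A hA hA_null => ?_
  rw [measure_eq_zero_iff_ae_notMem] at hA_null ⊢
  obtain ⟨x, hφ, hx⟩ :=
    (habs.and_eventually (ae_ae_kernelResolvent_of_ae_kernelResolvent_comp hA_null)).exists
  exact Measure.ae_comp_of_ae_ae hA.compl (hφ.ae_le hx)

end

/-- **Inheriting φ-irreducibility.**
Let `Q` be a Markov kernel from `X` to `Y`, `γ : Y → X` measurable, and `R` the deterministic
kernel `R(·|y) = δ_{γ(y)}`.  Set `K = Q⨟R = R ∘ₖ Q` (a kernel on `X`) and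
`K' = R⨟Q = Q ∘ₖ R` (a kernel on `Y`).  If the σ-finite measure `φ` on `X` is absolutely
continuous with respect to the kernelResolvent `∑_n 2^{-n} K^n(·|x)` for every `x`, then `φQ` is
absolutely continuous with respect to the kernelResolvent `∑_n 2^{-n} (K')^n(·|y)` for every `y`. -/
theorem absolutelyContinuous_bind_kernelResolvent {X Y : Type*} [MeasurableSpace X] [MeasurableSpace Y]
    (Q : Kernel X Y) [IsMarkovKernel Q] (γ : Y → X) (hγ : Measurable γ)
    (φ : Measure X) [SigmaFinite φ]
    (habs : ∀ x : X, φ ≪ kernelResolvent (Kernel.deterministic γ hγ ∘ₖ Q) x) :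
    ∀ y : Y, φ.bind Q ≪ kernelResolvent (Q ∘ₖ Kernel.deterministic γ hγ) y := by
  exact fun y => absolutelyContinuous_bind_kernelResolvent_general
    (Filter.Eventually.of_forall habs).frequently
end

section
/- Let X be a measurable space, q a Markov kernel on X, and α : X × X → [0,1] a jointly measurable function; define a(x) = ∫ α(x°, x) q(dx°|x) and the kernel K(A|x) = ∫_A α(x°, x) q(dx°|x) + (1 − a(x)) δ_x(A), and let π be a probability measure on X with πK = π. Let s : X → ℝ be measurable with ∫ s² dπ < ∞, and let w : X × X → ℝ be measurable with |w(x, x°)| ≤ α(x°, x) · (|s(x)| + |s(x°)|) for all x, x°. Then ∫∫ w(x, x°)² q(dx°|x) π(dx) ≤ 2 ∫ s² dπ + 2 ∫∫ α(x°, x) s(x°)² q(dx°|x) π(dx) ≤ 4 ∫ s² dπ; in particular the left-hand side is finite. -/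
open ProbabilityTheory MeasureTheory ENNReal

/-! Squaring the bound on `w` and using `α² ≤ α` gives `w² ≤ 2 α s(x)² + 2 α s(x°)²`. Integrating
the first term against `q` costs at most a factor `∫ α dq ≤ 1`. The second term is the integral of
`s²` along the accepted moves `α q`; these are only a part of `K`, so `π (α q) ≤ π K = π`, and the
integral is at most `∫ s² dπ`. -/

lemma sq_le_of_abs_le_mul_add_abs {R : Type*} [CommRing R] [LinearOrder R] [IsStrictOrderedRing R]
    {w a x y : R} (ha0 : 0 ≤ a) (ha1 : a ≤ 1) (hw : |w| ≤ a * (|x| + |y|)) :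
    w ^ 2 ≤ 2 * (a * x ^ 2) + 2 * (a * y ^ 2) := by
  have ha_sq : a ^ 2 ≤ a := pow_le_of_le_one ha0 ha1 two_ne_zero
  have hxy : (|x| + |y|) ^ 2 ≤ 2 * (x ^ 2 + y ^ 2) := by
    simpa only [sq_abs] using add_sq_le (a := |x|) (b := |y|)
  calc
    w ^ 2 = |w| ^ 2 := (sq_abs w).symm
    _ ≤ (a * (|x| + |y|)) ^ 2 := by gcongr
    _ = a ^ 2 * (|x| + |y|) ^ 2 := mul_pow _ _ _
    _ ≤ a * (2 * (x ^ 2 + y ^ 2)) := by gcongr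
    _ = 2 * (a * x ^ 2) + 2 * (a * y ^ 2) := by ring

lemma lintegral_sq_le_of_abs_le_mul_add_abs {Y : Type*} [MeasurableSpace Y] {ν : Measure Y}
    {a w t : Y → ℝ} {c : ℝ} (ha_meas : Measurable a) (ha0 : ∀ y, 0 ≤ a y) (ha1 : ∀ y, a y ≤ 1)
    (ha_mass : ∫⁻ y, ENNReal.ofReal (a y) ∂ν ≤ 1) (hw : ∀ y, |w y| ≤ a y * (|c| + |t y|)) :
    ∫⁻ y, ENNReal.ofReal (w y ^ 2) ∂ν ≤
      2 * ENNReal.ofReal (c ^ 2) + 2 * ∫⁻ y, ENNReal.ofReal (a y * t y ^ 2) ∂ν := by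
  have hpt (y : Y) : ENNReal.ofReal (w y ^ 2) ≤
      2 * (ENNReal.ofReal (a y) * ENNReal.ofReal (c ^ 2)) +
        2 * ENNReal.ofReal (a y * t y ^ 2) := by
    have ha := ha0 y
    calc
      ENNReal.ofReal (w y ^ 2)
        ≤ ENNReal.ofReal (2 * (a y * c ^ 2) + 2 * (a y * t y ^ 2)) :=
          ENNReal.ofReal_le_ofReal (sq_le_of_abs_le_mul_add_abs ha (ha1 y) (hw y))
      _ = _ := by
          rw [ENNReal.ofReal_add (by positivity) (by positivity), ENNReal.ofReal_mul zero_le_two,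
            ENNReal.ofReal_mul zero_le_two, ENNReal.ofReal_mul ha, ENNReal.ofReal_ofNat]
  calc
    ∫⁻ y, ENNReal.ofReal (w y ^ 2) ∂ν
      ≤ ∫⁻ y, 2 * (ENNReal.ofReal (a y) * ENNReal.ofReal (c ^ 2)) +
          2 * ENNReal.ofReal (a y * t y ^ 2) ∂ν := lintegral_mono hpt
    _ = 2 * ((∫⁻ y, ENNReal.ofReal (a y) ∂ν) * ENNReal.ofReal (c ^ 2)) +
          2 * ∫⁻ y, ENNReal.ofReal (a y * t y ^ 2) ∂ν := by
        rw [lintegral_add_left (by fun_prop), lintegral_const_mul' _ _ ofNat_ne_top,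
          lintegral_const_mul' _ _ ofNat_ne_top, lintegral_mul_const' _ _ ofReal_ne_top]
    _ ≤ 2 * ENNReal.ofReal (c ^ 2) + 2 * ∫⁻ y, ENNReal.ofReal (a y * t y ^ 2) ∂ν := by
        gcongr
        exact mul_le_of_le_one_left' ha_mass

lemma lintegral_lintegral_sq_le_of_abs_le_mul_add_abs {X Y : Type*} [MeasurableSpace X]
    [MeasurableSpace Y] {μ : Measure X} {ν : X → Measure Y} {α : Y → X → ℝ} {s : X → ℝ} {t : Y → ℝ}
    {w : X → Y → ℝ} (hα_meas : ∀ x, Measurable fun y => α y x) (hα0 : ∀ y x, 0 ≤ α y x)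
    (hα1 : ∀ y x, α y x ≤ 1) (hα_mass : ∀ x, ∫⁻ y, ENNReal.ofReal (α y x) ∂(ν x) ≤ 1)
    (hs : Measurable s) (hw : ∀ x y, |w x y| ≤ α y x * (|s x| + |t y|)) :
    ∫⁻ x, ∫⁻ y, ENNReal.ofReal (w x y ^ 2) ∂(ν x) ∂μ ≤
      2 * ∫⁻ x, ENNReal.ofReal (s x ^ 2) ∂μ +
        2 * ∫⁻ x, ∫⁻ y, ENNReal.ofReal (α y x * t y ^ 2) ∂(ν x) ∂μ := by
  rw [← lintegral_const_mul' _ _ ofNat_ne_top, ← lintegral_const_mul' _ _ ofNat_ne_top,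
    ← lintegral_add_left (by fun_prop)]
  exact lintegral_mono fun x => lintegral_sq_le_of_abs_le_mul_add_abs (hα_meas x)
    (fun y => hα0 y x) (fun y => hα1 y x) (hα_mass x) (hw x)

section AcceptedMove

variable {X Y : Type*} [MeasurableSpace X] [MeasurableSpace Y]

/-- The accepted-move part `A ↦ ∫_A α(y, x) q(dy|x)` of the Metropolis–Hastings kernel with proposal
`q` and acceptance probability `α`. As in `α(x°, x)`, the first argument of `α` is the proposed
state; if the positive part of `α` is not jointly measurable, `Kernel.withDensity` gives the zero
kernel. -/
noncomputable def acceptedMove (q : Kernel X Y) [IsSFiniteKernel q] (α : Y → X → ℝ) : Kernel X Y :=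
  q.withDensity fun x y => ENNReal.ofReal (α y x)

lemma measurable_uncurry_ofReal_swap {α : Y → X → ℝ}
    (hα : Measurable fun p : Y × X => α p.1 p.2) :
    Measurable (Function.uncurry fun x y => ENNReal.ofReal (α y x)) :=
  (hα.comp measurable_swap).ennreal_ofReal

lemma acceptedMove_apply (q : Kernel X Y) [IsSFiniteKernel q] {α : Y → X → ℝ}
    (hα : Measurable fun p : Y × X => α p.1 p.2) (x : X) (A : Set Y) :
    acceptedMove q α x A = ∫⁻ y in A, ENNReal.ofReal (α y x) ∂(q x) :=
  Kernel.withDensity_apply' q (measurable_uncurry_ofReal_swap hα) x A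

lemma lintegral_acceptedMove (q : Kernel X Y) [IsSFiniteKernel q] {α : Y → X → ℝ}
    (hα : Measurable fun p : Y × X => α p.1 p.2) (x : X) {f : Y → ℝ≥0∞} (hf : Measurable f) :
    ∫⁻ y, f y ∂(acceptedMove q α x) = ∫⁻ y, ENNReal.ofReal (α y x) * f y ∂(q x) :=
  Kernel.lintegral_withDensity q (measurable_uncurry_ofReal_swap hα) x hf

lemma bind_acceptedMove_le {q : Kernel X X} [IsSFiniteKernel q] {α : X → X → ℝ}
    (hα : Measurable fun p : X × X => α p.1 p.2) {μ : Measure X} {r : X → ℝ≥0∞}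
    (hμ : ∀ A, MeasurableSet A →
      ∫⁻ x, (∫⁻ x' in A, ENNReal.ofReal (α x' x) ∂(q x)) + r x * A.indicator (fun _ => 1) x ∂μ ≤
        μ A) :
    μ.bind (acceptedMove q α) ≤ μ := by
  refine Measure.le_iff.2 fun A hA => ?_
  rw [Measure.bind_apply hA (acceptedMove q α).aemeasurable]
  simp only [acceptedMove_apply q hα]
  exact (lintegral_mono fun _ => le_self_add).trans (hμ A hA)

lemma lintegral_lintegral_mul_le_of_bind_acceptedMove_le {q : Kernel X Y} [IsSFiniteKernel q]
    {α : Y → X → ℝ} (hα : Measurable fun p : Y × X => α p.1 p.2) {μ : Measure X} {ν : Measure Y}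
    (hle : μ.bind (acceptedMove q α) ≤ ν) {f : Y → ℝ≥0∞} (hf : Measurable f) :
    ∫⁻ x, ∫⁻ y, ENNReal.ofReal (α y x) * f y ∂(q x) ∂μ ≤ ∫⁻ y, f y ∂ν := by
  calc
    ∫⁻ x, ∫⁻ y, ENNReal.ofReal (α y x) * f y ∂(q x) ∂μ
      = ∫⁻ x, ∫⁻ y, f y ∂(acceptedMove q α x) ∂μ := by
        simp only [lintegral_acceptedMove q hα _ hf]
    _ = ∫⁻ y, f y ∂(μ.bind (acceptedMove q α)) :=
        (Measure.lintegral_bind (acceptedMove q α).aemeasurable hf.aemeasurable).symm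
    _ ≤ ∫⁻ y, f y ∂ν := lintegral_mono' hle le_rfl

end AcceptedMove

theorem DMH_weight_second_moment_general {X : Type*} [MeasurableSpace X]
    (q : Kernel X X) [IsSFiniteKernel q]
    (α : X → X → ℝ) (hα_meas : Measurable fun p : X × X => α p.1 p.2)
    (hα0 : ∀ x' x : X, 0 ≤ α x' x) (hα1 : ∀ x' x : X, α x' x ≤ 1)
    (hα_mass : ∀ x, ∫⁻ x', ENNReal.ofReal (α x' x) ∂(q x) ≤ 1)
    (π : Measure X) (hπ : π.bind (acceptedMove q α) ≤ π)
    (s : X → ℝ) (hs_meas : Measurable s)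
    (hs2 : ∫⁻ x, ENNReal.ofReal (s x ^ 2) ∂π < ⊤)
    (w : X → X → ℝ) (hw_le : ∀ x x' : X, |w x x'| ≤ α x' x * (|s x| + |s x'|)) :
    (∫⁻ x, ∫⁻ x', ENNReal.ofReal (w x x' ^ 2) ∂(q x) ∂π ≤
        2 * ∫⁻ x, ENNReal.ofReal (s x ^ 2) ∂π +
          2 * ∫⁻ x, ∫⁻ x', ENNReal.ofReal (α x' x * s x' ^ 2) ∂(q x) ∂π) ∧
      (2 * ∫⁻ x, ENNReal.ofReal (s x ^ 2) ∂π +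
          2 * ∫⁻ x, ∫⁻ x', ENNReal.ofReal (α x' x * s x' ^ 2) ∂(q x) ∂π ≤
        4 * ∫⁻ x, ENNReal.ofReal (s x ^ 2) ∂π) ∧
      ∫⁻ x, ∫⁻ x', ENNReal.ofReal (w x x' ^ 2) ∂(q x) ∂π < ⊤ := by
  have h_weight := lintegral_lintegral_sq_le_of_abs_le_mul_add_abs (μ := π) (ν := q)
    (fun _ => hα_meas.of_uncurry_right) hα0 hα1 hα_mass hs_meas hw_le
  have h_accepted : ∫⁻ x, ∫⁻ x', ENNReal.ofReal (α x' x * s x' ^ 2) ∂(q x) ∂π ≤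
      ∫⁻ x, ENNReal.ofReal (s x ^ 2) ∂π := by
    simpa only [ENNReal.ofReal_mul' (sq_nonneg _)] using
      lintegral_lintegral_mul_le_of_bind_acceptedMove_le hα_meas hπ
        (hs_meas.pow_const 2).ennreal_ofReal
  have h_sum : 2 * ∫⁻ x, ENNReal.ofReal (s x ^ 2) ∂π +
      2 * ∫⁻ x, ∫⁻ x', ENNReal.ofReal (α x' x * s x' ^ 2) ∂(q x) ∂π ≤
        4 * ∫⁻ x, ENNReal.ofReal (s x ^ 2) ∂π := by
    calc
      _ ≤ 2 * ∫⁻ x, ENNReal.ofReal (s x ^ 2) ∂π + 2 * ∫⁻ x, ENNReal.ofReal (s x ^ 2) ∂π := by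
        gcongr
      _ = 4 * ∫⁻ x, ENNReal.ofReal (s x ^ 2) ∂π := by ring
  exact ⟨h_weight, h_sum,
    (h_weight.trans h_sum).trans_lt (ENNReal.mul_lt_top ofNat_lt_top hs2)⟩

/-- **Weight moments bound for the DMH estimator.**
Let `q` be a Markov kernel on `X` and `α : X × X → [0,1]` jointly measurable, and let `π`
be invariant for the Metropolis–Hastings-type kernel
`K(A|x) = ∫_A α(x°,x) q(dx°|x) + (1 − a(x)) δ_x(A)`.  Let `s : X → ℝ` be measurable with
`∫ s² dπ < ∞`, and let `w : X × X → ℝ` be measurable with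
`|w(x,x°)| ≤ α(x°,x)(|s x| + |s x°|)`.  Then
`∫∫ w² dq dπ ≤ 2 ∫ s² dπ + 2 ∫∫ α(x°,x) s(x°)² dq dπ ≤ 4 ∫ s² dπ`; in particular the
left-hand side is finite. -/
theorem DMH_weight_second_moment {X : Type*} [MeasurableSpace X]
    (q : Kernel X X) [IsMarkovKernel q]
    (α : X → X → ℝ) (hα_meas : Measurable fun p : X × X => α p.1 p.2)
    (hα0 : ∀ x' x : X, 0 ≤ α x' x) (hα1 : ∀ x' x : X, α x' x ≤ 1)
    (π : Measure X) [IsProbabilityMeasure π]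
    (hinv : ∀ A : Set X, MeasurableSet A →
      ∫⁻ x, (∫⁻ x' in A, ENNReal.ofReal (α x' x) ∂(q x)) +
          (1 - ∫⁻ x', ENNReal.ofReal (α x' x) ∂(q x)) *
            A.indicator (fun _ => (1 : ℝ≥0∞)) x ∂π = π A)
    (s : X → ℝ) (hs_meas : Measurable s)
    (hs2 : ∫⁻ x, ENNReal.ofReal (s x ^ 2) ∂π < ⊤)
    (w : X → X → ℝ) (hw_meas : Measurable fun p : X × X => w p.1 p.2)
    (hw_le : ∀ x x' : X, |w x x'| ≤ α x' x * (|s x| + |s x'|)) :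
    (∫⁻ x, ∫⁻ x', ENNReal.ofReal (w x x' ^ 2) ∂(q x) ∂π ≤
        2 * ∫⁻ x, ENNReal.ofReal (s x ^ 2) ∂π +
          2 * ∫⁻ x, ∫⁻ x', ENNReal.ofReal (α x' x * s x' ^ 2) ∂(q x) ∂π) ∧
      (2 * ∫⁻ x, ENNReal.ofReal (s x ^ 2) ∂π +
          2 * ∫⁻ x, ∫⁻ x', ENNReal.ofReal (α x' x * s x' ^ 2) ∂(q x) ∂π ≤
        4 * ∫⁻ x, ENNReal.ofReal (s x ^ 2) ∂π) ∧
      ∫⁻ x, ∫⁻ x', ENNReal.ofReal (w x x' ^ 2) ∂(q x) ∂π < ⊤ := by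
  have hα_mass (x : X) : ∫⁻ x', ENNReal.ofReal (α x' x) ∂(q x) ≤ 1 :=
    lintegral_le_const (ae_of_all _ fun x' => ENNReal.ofReal_le_one.2 (hα1 x' x))
  exact DMH_weight_second_moment_general q α hα_meas hα0 hα1 hα_mass π
    (bind_acceptedMove_le hα_meas fun A hA => (hinv A hA).le) s hs_meas hs2 w hw_le
end

section
/- Let (Ω, F, μ) be a probability space, T : Ω → Ω a measure-preserving transformation that is ergodic with respect to μ, and let h and (h_m)_{m∈ℕ} be measurable real-valued functions on Ω such that h_m → h μ-almost everywhere and sup_{m∈ℕ} |h_m| is μ-integrable. Then for μ-almost every ω, (1/N) Σ_{n=0}^{N−1} h_{N−n}(T^n ω) → ∫ h dμ as N → ∞, and the convergence also holds in L¹(μ). -/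
open MeasureTheory Filter Topology

/-!
Hopf's maximal inequality shows that an integrable `g` with negative mean has almost surely bounded
Birkhoff sums. Applied to `f - c` and `c' - f` for rational `c > ∫ f > c'`, it gives Birkhoff's
pointwise theorem for real functions. The averaging operators are dominated, pointwise in norm, by
those of the norm, so the vector-valued theorem follows by density of simple functions in `L¹`.

For Maker's theorem, write `h_m = h + d_m` and let `G_k = sup_{m ≥ k} ‖d_m‖`. In the triangular
average of `d`, all but the last `k` terms have horizon at least `k`, so they contribute at most the
Birkhoff average of `G_k`, whose limit `∫ G_k` tends to `0` by dominated convergence; the last `k`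
terms are bounded by a block of `k` values of `G_0` along the orbit, which is negligible after
division by `N`. The triangular averages are dominated by the Birkhoff averages of `sup_m ‖h_m‖`,
which are uniformly integrable, and Vitali's theorem upgrades the convergence to the `L^p` norm.
-/

open scoped ENNReal

section BirkhoffMax

/-- The maximal function `max_{0 ≤ k ≤ n} S_k` of the Birkhoff sums `S_k` of `g` along `T`,
monotone in `n`; it is nonnegative since the empty sum `S_0 = 0` is included. -/
def birkhoffMax {α M : Type*} [AddCommMonoid M] [SemilatticeSup M] (T : α → α) (g : α → M) :
    ℕ →o (α → M) :=
  partialSups (birkhoffSum T g)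

section Monoid

variable {α M : Type*} [AddCommMonoid M] [SemilatticeSup M] {T : α → α} {g : α → M}

theorem birkhoffMax_zero : birkhoffMax T g 0 = 0 := by
  simp [birkhoffMax]

theorem birkhoffMax_nonneg (n : ℕ) (x : α) : 0 ≤ birkhoffMax T g n x :=
  (congrFun birkhoffMax_zero x).symm.trans_le ((birkhoffMax T g).monotone n.zero_le x)

theorem bddAbove_range_birkhoffMax_iff (x : α) :
    BddAbove (Set.range fun n ↦ birkhoffMax T g n x) ↔
      BddAbove (Set.range fun n ↦ birkhoffSum T g n x) := by
  simp only [birkhoffMax, Pi.partialSups_apply, bddAbove_range_partialSups]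

end Monoid

section Group

variable {α M : Type*} [AddCommGroup M] [Lattice M] [IsOrderedAddMonoid M] {T : α → α} {g : α → M}

theorem birkhoffMax_succ (n : ℕ) (x : α) :
    birkhoffMax T g (n + 1) x = 0 ⊔ (g x + birkhoffMax T g n (T x)) := by
  have shift : (fun k ↦ birkhoffSum T g (k + 1) x) =
      fun k ↦ OrderIso.addLeft (g x) (birkhoffSum T g k (T x)) :=
    funext fun k ↦ birkhoffSum_succ' T g k x
  simp only [birkhoffMax, Pi.partialSups_apply, partialSups_add_one', Function.comp_def, shift]
  rw [← Function.comp_def (OrderIso.addLeft (g x)), comp_partialSups]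
  simp

theorem birkhoffMax_succ_sub_birkhoffMax_apply (n : ℕ) (x : α) :
    birkhoffMax T g (n + 1) x - birkhoffMax T g n (T x) = -birkhoffMax T g n (T x) ⊔ g x := by
  rw [birkhoffMax_succ, sup_sub, zero_sub, add_sub_cancel_right]

theorem bddAbove_range_birkhoffSum_apply_iff (x : α) :
    BddAbove (Set.range fun n ↦ birkhoffSum T g n (T x)) ↔
      BddAbove (Set.range fun n ↦ birkhoffSum T g n x) := by
  simp only [← bddAbove_range_birkhoffMax_iff (T := T)]
  constructor
  · rintro ⟨C, hC⟩
    refine ⟨0 ⊔ (g x + C), Set.forall_mem_range.2 fun n ↦ ?_⟩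
    calc birkhoffMax T g n x ≤ birkhoffMax T g (n + 1) x :=
          (birkhoffMax T g).monotone n.le_succ x
      _ = 0 ⊔ (g x + birkhoffMax T g n (T x)) := birkhoffMax_succ n x
      _ ≤ 0 ⊔ (g x + C) := by gcongr; exact hC ⟨n, rfl⟩
  · rintro ⟨C, hC⟩
    refine ⟨-g x + C, Set.forall_mem_range.2 fun n ↦ le_neg_add_iff_add_le.2 ?_⟩
    calc g x + birkhoffMax T g n (T x) ≤ birkhoffMax T g (n + 1) x := by
          rw [birkhoffMax_succ]; exact le_sup_right
      _ ≤ C := hC ⟨n + 1, rfl⟩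

end Group

end BirkhoffMax

section Birkhoff

variable {Ω : Type*} [MeasurableSpace Ω] {μ : Measure Ω} {T : Ω → Ω}

theorem ae_forall_iterate (hT : Measure.QuasiMeasurePreserving T μ μ) {P : Ω → Prop}
    (hP : ∀ᵐ ω ∂μ, P ω) : ∀ᵐ ω ∂μ, ∀ n, P (T^[n] ω) :=
  ae_all_iff.2 fun n ↦ (hT.iterate n).ae hP

theorem nullMeasurableSet_bddAbove_range {ι α : Type*} [Countable ι]
    [ConditionallyCompleteLinearOrder α] [TopologicalSpace α] [OrderTopology α]
    [SecondCountableTopology α] [MeasurableSpace α] [BorelSpace α] {f : ι → Ω → α}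
    (hf : ∀ i, AEMeasurable (f i) μ) :
    NullMeasurableSet {ω | BddAbove (Set.range fun i ↦ f i ω)} μ := by
  refine (measurableSet_bddAbove_range fun i ↦ (hf i).measurable_mk).nullMeasurableSet.congr ?_
  filter_upwards [ae_all_iff.2 fun i ↦ (hf i).ae_eq_mk] with ω hω
  exact congrArg (fun u : ι → α ↦ BddAbove (Set.range u)) (funext fun i ↦ (hω i).symm)

theorem integrable_birkhoffSum {E : Type*} [NormedAddCommGroup E] (hT : MeasurePreserving T μ μ)
    {f : Ω → E} (hf : Integrable f μ) (n : ℕ) : Integrable (birkhoffSum T f n) μ :=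
  integrable_finsetSum _ fun i _ ↦ (hT.iterate i).integrable_comp_of_integrable hf

theorem integrable_birkhoffMax (hT : MeasurePreserving T μ μ) {g : Ω → ℝ} (hg : Integrable g μ)
    (n : ℕ) : Integrable (birkhoffMax T g n) μ := by
  induction n with
  | zero => exact birkhoffMax_zero (T := T) (g := g) ▸ integrable_zero Ω ℝ μ
  | succ n ih =>
    simp only [funext (birkhoffMax_succ (T := T) (g := g) n)]
    exact (integrable_zero Ω ℝ μ).sup (hg.add (hT.integrable_comp_of_integrable ih))

theorem integral_max_neg_birkhoffMax_nonneg (hT : MeasurePreserving T μ μ) {g : Ω → ℝ}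
    (hg : Integrable g μ) (n : ℕ) : 0 ≤ ∫ ω, max (-birkhoffMax T g n (T ω)) (g ω) ∂μ := by
  have hM := integrable_birkhoffMax hT hg
  simp only [← birkhoffMax_succ_sub_birkhoffMax_apply]
  have hshift : ∫ ω, birkhoffMax T g n (T ω) ∂μ = ∫ ω, birkhoffMax T g n ω ∂μ := by
    rw [← integral_map hT.aemeasurable (hT.map_eq.symm ▸ (hM n).1), hT.map_eq]
  have hsub := integral_sub (hM (n + 1)) (hT.integrable_comp_of_integrable (hM n))
  simp only [Function.comp_apply] at hsub
  rw [hsub, hshift, sub_nonneg]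
  exact integral_mono (hM n) (hM (n + 1)) ((birkhoffMax T g).monotone n.le_succ)

/- Where the Birkhoff sums are unbounded the maximal function diverges, so the integrands of
`integral_max_neg_birkhoffMax_nonneg` converge to `g`. -/
theorem integral_nonneg_of_not_bddAbove_birkhoffSum (hT : MeasurePreserving T μ μ) {g : Ω → ℝ}
    (hg : Integrable g μ)
    (hunb : ∀ᵐ ω ∂μ, ¬BddAbove (Set.range fun n ↦ birkhoffSum T g n ω)) :
    0 ≤ ∫ ω, g ω ∂μ := by
  have hM := integrable_birkhoffMax hT hg
  refine ge_of_tendsto' (tendsto_integral_of_dominated_convergence (fun ω ↦ |g ω|)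
    (fun n ↦ ((hT.integrable_comp_of_integrable (hM n)).neg.sup hg).1) hg.abs
    (fun n ↦ ae_of_all _ fun ω ↦ ?_) ?_) (integral_max_neg_birkhoffMax_nonneg hT hg)
  · exact abs_le.2 ⟨(neg_abs_le _).trans (le_max_right _ _),
      max_le ((neg_nonpos.2 (birkhoffMax_nonneg n _)).trans (abs_nonneg _)) (le_abs_self _)⟩
  · filter_upwards [hunb] with ω hω
    rw [← bddAbove_range_birkhoffSum_apply_iff, ← bddAbove_range_birkhoffMax_iff] at hω
    have hdiv : Tendsto (fun n ↦ birkhoffMax T g n (T ω)) atTop atTop :=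
      tendsto_atTop_atTop_of_monotone'
        (fun _ _ hmn ↦ (birkhoffMax T g).monotone hmn (T ω)) hω
    refine tendsto_const_nhds.congr' ?_
    filter_upwards [hdiv.eventually_ge_atTop (-g ω)] with n hn
    exact (max_eq_right (neg_le.1 hn)).symm

theorem ae_bddAbove_birkhoffSum_of_integral_neg (hT : Ergodic T μ) {g : Ω → ℝ}
    (hg : Integrable g μ) (hneg : ∫ ω, g ω ∂μ < 0) :
    ∀ᵐ ω ∂μ, BddAbove (Set.range fun n ↦ birkhoffSum T g n ω) := by
  set B := {ω | BddAbove (Set.range fun n ↦ birkhoffSum T g n ω)}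
  have hB : NullMeasurableSet B μ := nullMeasurableSet_bddAbove_range fun n ↦
    (integrable_birkhoffSum hT.toMeasurePreserving hg n).aemeasurable
  have hinv : T ⁻¹' B = B := Set.ext bddAbove_range_birkhoffSum_apply_iff
  rcases hT.quasiErgodic.ae_empty_or_univ₀ hB hinv.eventuallyEq with hempty | huniv
  · exact absurd (integral_nonneg_of_not_bddAbove_birkhoffSum hT.toMeasurePreserving hg
      (eventuallyEq_empty.1 hempty)) hneg.not_ge
  · exact eventuallyEq_univ.1 huniv

variable [IsProbabilityMeasure μ]

theorem ae_eventually_birkhoffAverage_lt (hT : Ergodic T μ) {f : Ω → ℝ} (hf : Integrable f μ)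
    {c : ℝ} (hc : ∫ ω, f ω ∂μ < c) :
    ∀ᵐ ω ∂μ, ∀ᶠ N : ℕ in atTop, birkhoffAverage ℝ T f N ω < c := by
  obtain ⟨b, hfb, hbc⟩ := exists_between hc
  have hneg : ∫ ω, (f ω - b) ∂μ < 0 := by
    rw [integral_sub hf (integrable_const b)]
    simpa using hfb
  filter_upwards [ae_bddAbove_birkhoffSum_of_integral_neg hT (hf.sub (integrable_const b)) hneg]
    with ω ⟨C, hC⟩
  have hlim : Tendsto (fun N : ℕ ↦ b + (N : ℝ)⁻¹ * C) atTop (𝓝 b) := by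
    simpa using ((tendsto_inv_atTop_nhds_zero_nat (𝕜 := ℝ)).mul_const C).const_add b
  filter_upwards [hlim.eventually_lt_const hbc, eventually_gt_atTop 0] with N hN hN0
  have hsum : birkhoffSum T f N ω ≤ N * b + C := by
    have := hC ⟨N, rfl⟩
    simp only [birkhoffSum, Pi.sub_apply, Finset.sum_sub_distrib, Finset.sum_const,
      Finset.card_range, nsmul_eq_mul] at this
    exact sub_le_iff_le_add'.1 this
  calc birkhoffAverage ℝ T f N ω ≤ (N : ℝ)⁻¹ * (N * b + C) := by
        rw [birkhoffAverage, smul_eq_mul]; gcongr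
    _ = b + (N : ℝ)⁻¹ * C := by field_simp
    _ < c := hN

theorem ae_tendsto_birkhoffAverage_real (hT : Ergodic T μ) {f : Ω → ℝ} (hf : Integrable f μ) :
    ∀ᵐ ω ∂μ, Tendsto (birkhoffAverage ℝ T f · ω) atTop (𝓝 (∫ x, f x ∂μ)) := by
  have upper {f : Ω → ℝ} (hf : Integrable f μ) : ∀ᵐ ω ∂μ, ∀ c : ℚ, ∫ x, f x ∂μ < c →
      ∀ᶠ N : ℕ in atTop, birkhoffAverage ℝ T f N ω < c :=
    ae_all_iff.2 fun _ ↦ eventually_imp_distrib_left.2 (ae_eventually_birkhoffAverage_lt hT hf)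
  filter_upwards [upper hf, upper hf.neg] with ω hupper hlower
  refine tendsto_order.2 ⟨fun a ha ↦ ?_, fun b hb ↦ ?_⟩
  · obtain ⟨c, hfc, hca⟩ := exists_rat_btwn (neg_lt_neg ha)
    filter_upwards [hlower c (by simpa only [Pi.neg_apply, integral_neg] using hfc)] with N hN
    rw [birkhoffAverage_neg] at hN
    exact neg_lt_neg_iff.1 (hN.trans hca)
  · obtain ⟨c, hfc, hcb⟩ := exists_rat_btwn hb
    exact (hupper c hfc).mono fun N hN ↦ hN.trans hcb

end Birkhoff

section BirkhoffBanach

variable {E : Type*} [NormedAddCommGroup E] [NormedSpace ℝ E]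

theorem norm_birkhoffAverage_le {α : Type*} (T : α → α) (f : α → E) (N : ℕ) (x : α) :
    ‖birkhoffAverage ℝ T f N x‖ ≤ birkhoffAverage ℝ T (fun y ↦ ‖f y‖) N x := by
  simp only [birkhoffAverage, birkhoffSum, norm_smul, norm_inv, RCLike.norm_natCast, smul_eq_mul]
  gcongr
  exact norm_sum_le _ _

variable {Ω : Type*} [MeasurableSpace Ω] {μ : Measure Ω} [IsProbabilityMeasure μ] {T : Ω → Ω}

theorem ae_tendsto_birkhoffAverage_of_tendsto_integral_norm_sub (hT : Ergodic T μ) {f : Ω → E}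
    {u : ℕ → Ω → E} (hf : Integrable f μ) (hu : ∀ k, Integrable (u k) μ)
    (huf : Tendsto (fun k ↦ ∫ ω, ‖u k ω - f ω‖ ∂μ) atTop (𝓝 0))
    (hlim : ∀ k, ∀ᵐ ω ∂μ,
      Tendsto (birkhoffAverage ℝ T (u k) · ω) atTop (𝓝 (∫ x, u k x ∂μ))) :
    ∀ᵐ ω ∂μ, Tendsto (birkhoffAverage ℝ T f · ω) atTop (𝓝 (∫ x, f x ∂μ)) := by
  have hnorm := ae_all_iff.2 fun k ↦ ae_tendsto_birkhoffAverage_real hT ((hu k).sub hf).norm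
  filter_upwards [ae_all_iff.2 hlim, hnorm] with ω hω hωnorm
  refine Metric.tendsto_nhds.2 fun ε hε ↦ ?_
  obtain ⟨k, hk⟩ := (huf.eventually_lt_const (show (0 : ℝ) < ε / 3 by positivity)).exists
  filter_upwards [(hωnorm k).eventually_lt_const hk,
    Metric.tendsto_nhds.1 (hω k) (ε / 3) (by positivity)] with N hN hNu
  have hdist : dist (birkhoffAverage ℝ T f N ω) (birkhoffAverage ℝ T (u k) N ω) < ε / 3 := by
    rw [dist_comm, dist_eq_norm, ← Pi.sub_apply, ← Pi.sub_apply, ← birkhoffAverage_sub]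
    exact (norm_birkhoffAverage_le T (u k - f) N ω).trans_lt hN
  have hint : dist (∫ x, u k x ∂μ) (∫ x, f x ∂μ) < ε / 3 := by
    rw [dist_eq_norm, ← integral_sub (hu k) hf]
    exact (norm_integral_le_integral_norm _).trans_lt hk
  linarith [dist_triangle4 (birkhoffAverage ℝ T f N ω) (birkhoffAverage ℝ T (u k) N ω)
    (∫ x, u k x ∂μ) (∫ x, f x ∂μ)]

theorem ae_tendsto_birkhoffAverage_smul_const [CompleteSpace E] (hT : Ergodic T μ) {f : Ω → ℝ}
    (hf : Integrable f μ) (c : E) :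
    ∀ᵐ ω ∂μ, Tendsto (birkhoffAverage ℝ T (fun x ↦ f x • c) · ω) atTop
      (𝓝 (∫ x, f x • c ∂μ)) := by
  filter_upwards [ae_tendsto_birkhoffAverage_real hT hf] with ω hω
  rw [integral_smul_const]
  refine (hω.smul_const c).congr fun N ↦ ?_
  exact map_birkhoffAverage ℝ ℝ (LinearMap.toSpanSingleton ℝ E c) T f N ω

theorem ae_tendsto_birkhoffAverage [CompleteSpace E] (hT : Ergodic T μ) {f : Ω → E}
    (hf : Integrable f μ) :
    ∀ᵐ ω ∂μ, Tendsto (birkhoffAverage ℝ T f · ω) atTop (𝓝 (∫ x, f x ∂μ)) := by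
  refine Integrable.induction (fun f : Ω → E ↦ ∀ᵐ ω ∂μ,
    Tendsto (birkhoffAverage ℝ T f · ω) atTop (𝓝 (∫ x, f x ∂μ))) ?_ ?_ ?_ ?_ hf
  · intro c s hs _
    have hind : s.indicator (fun _ ↦ c) = fun x ↦ s.indicator (1 : Ω → ℝ) x • c := by
      simp [← Set.indicator_smul_const_apply]
    rw [hind]
    exact ae_tendsto_birkhoffAverage_smul_const hT ((integrable_const 1).indicator hs) c
  · intro f g _ hf hg hflim hglim
    filter_upwards [hflim, hglim] with ω hfω hgω
    simpa [birkhoffAverage_add, integral_add hf hg] using hfω.add hgω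
  · refine IsSeqClosed.isClosed fun u f hu huf ↦ ?_
    refine ae_tendsto_birkhoffAverage_of_tendsto_integral_norm_sub hT (L1.integrable_coeFn f)
      (fun k ↦ L1.integrable_coeFn (u k)) ?_ hu
    have hdist := tendsto_iff_dist_tendsto_zero.1 huf
    simp only [L1.dist_eq_integral_dist] at hdist
    simpa only [dist_eq_norm] using hdist
  · intro f g hfg _ hflim
    have haverage := ae_all_iff.2
      (hT.quasiMeasurePreserving.birkhoffAverage_ae_eq_of_ae_eq ℝ hfg)
    filter_upwards [hflim, haverage] with ω hω hωavg
    simpa only [hωavg, integral_congr_ae hfg] using hω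

end BirkhoffBanach

section Lp

variable {Ω E : Type*} [MeasurableSpace Ω] {μ : Measure Ω} [NormedAddCommGroup E] {p : ℝ≥0∞}

theorem unifIntegrable_of_norm_le {ι F : Type*} [NormedAddCommGroup F] {f : ι → Ω → E}
    {g : ι → Ω → F} (hg : UnifIntegrable g p μ) (hfg : ∀ i, ∀ᵐ ω ∂μ, ‖f i ω‖ ≤ ‖g i ω‖) :
    UnifIntegrable f p μ := by
  intro ε hε
  obtain ⟨δ, hδ, hsmall⟩ := hg hε
  refine ⟨δ, hδ, fun i s hs hμs ↦ (eLpNorm_mono_ae ?_).trans (hsmall i s hs hμs)⟩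
  filter_upwards [hfg i] with ω hω
  simp only [norm_indicator_eq_indicator_norm]
  exact Set.indicator_le_indicator hω

theorem unifIntegrable_birkhoffAverage [IsFiniteMeasure μ] [NormedSpace ℝ E] {T : Ω → Ω}
    (hT : MeasurePreserving T μ μ) (hp : 1 ≤ p) (hp' : p ≠ ∞) {f : Ω → E} (hf : MemLp f p μ) :
    UnifIntegrable (birkhoffAverage ℝ T f) p μ := by
  borelize E
  have hident (n : ℕ) : ProbabilityTheory.IdentDistrib (f ∘ T^[n]) (f ∘ T^[0]) μ μ := by
    have hTn := hT.iterate n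
    have hfn : AEMeasurable f (μ.map T^[n]) := hTn.map_eq.symm ▸ hf.1.aemeasurable
    refine ⟨hfn.comp_aemeasurable hTn.aemeasurable, hf.1.aemeasurable, ?_⟩
    rw [← AEMeasurable.map_map_of_aemeasurable hfn hTn.aemeasurable, hTn.map_eq]
    rfl
  have horbit : UniformIntegrable (fun n ↦ f ∘ T^[n]) p μ :=
    ProbabilityTheory.MemLp.uniformIntegrable_of_identDistrib (j := 0) hp hp' hf hident
  convert (uniformIntegrable_average hp horbit).unifIntegrable using 1
  ext N ω
  simp [birkhoffAverage, birkhoffSum]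

theorem tendsto_integral_norm_of_tendsto_eLpNorm_one {ι : Type*} {l : Filter ι}
    {f : ι → Ω → E} (hf : ∀ i, AEStronglyMeasurable (f i) μ)
    (hlim : Tendsto (fun i ↦ eLpNorm (f i) 1 μ) l (𝓝 0)) :
    Tendsto (fun i ↦ ∫ ω, ‖f i ω‖ ∂μ) l (𝓝 0) := by
  simp only [integral_norm_eq_lintegral_enorm (hf _), ← eLpNorm_one_eq_lintegral_enorm]
  exact (ENNReal.tendsto_toReal ENNReal.zero_ne_top).comp hlim

end Lp

section TailSup

theorem tendsto_ciSup_add_atTop {α : Type*} [ConditionallyCompleteLinearOrder α]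
    [TopologicalSpace α] [OrderTopology α] [DenselyOrdered α] {u : ℕ → α} {a : α}
    (hu : Tendsto u atTop (𝓝 a)) : Tendsto (fun k ↦ ⨆ m, u (k + m)) atTop (𝓝 a) := by
  have hbdd (k : ℕ) : BddAbove (Set.range fun m ↦ u (k + m)) :=
    hu.bddAbove_range.mono (Set.range_comp_subset_range (k + ·) u)
  refine tendsto_order.2 ⟨fun b hb ↦ ?_, fun b hb ↦ ?_⟩
  · filter_upwards [hu.eventually_const_lt hb] with k hk
    exact hk.trans_le (le_ciSup (hbdd k) 0)
  · obtain ⟨c, hac, hcb⟩ := exists_between hb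
    filter_upwards [eventually_forall_ge_atTop.2 (hu.eventually_lt_const hac)] with k hk
    exact (ciSup_le fun m ↦ (hk (k + m) (k.le_add_right m)).le).trans_lt hcb

theorem abs_ciSup_le {ι : Sort*} [Nonempty ι] {u : ι → ℝ} {C : ℝ} (hu : ∀ i, |u i| ≤ C) :
    |⨆ i, u i| ≤ C := by
  have hbdd : BddAbove (Set.range u) := ⟨C, Set.forall_mem_range.2 fun i ↦ (abs_le.1 (hu i)).2⟩
  obtain ⟨i⟩ := ‹Nonempty ι›
  exact abs_le.2 ⟨(abs_le.1 (hu i)).1.trans (le_ciSup hbdd i),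
    ciSup_le fun j ↦ (abs_le.1 (hu j)).2⟩

variable {Ω : Type*} [MeasurableSpace Ω] {μ : Measure Ω} {F : Ω → ℝ}

theorem integrable_ciSup_of_abs_le {ι : Type*} [Countable ι] [Nonempty ι] {u : ι → Ω → ℝ}
    (hu : ∀ i, AEMeasurable (u i) μ) (hF : Integrable F μ) (huF : ∀ᵐ ω ∂μ, ∀ i, |u i ω| ≤ F ω) :
    Integrable (fun ω ↦ ⨆ i, u i ω) μ :=
  hF.mono' (AEMeasurable.iSup hu).aestronglyMeasurable (huF.mono fun _ ↦ abs_ciSup_le)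

theorem tendsto_integral_ciSup_add_atTop {u : ℕ → Ω → ℝ} {f : Ω → ℝ}
    (hu : ∀ m, AEMeasurable (u m) μ) (hF : Integrable F μ) (huF : ∀ᵐ ω ∂μ, ∀ m, |u m ω| ≤ F ω)
    (hlim : ∀ᵐ ω ∂μ, Tendsto (u · ω) atTop (𝓝 (f ω))) :
    Tendsto (fun k ↦ ∫ ω, ⨆ m, u (k + m) ω ∂μ) atTop (𝓝 (∫ ω, f ω ∂μ)) :=
  tendsto_integral_of_dominated_convergence F
    (fun k ↦ (AEMeasurable.iSup fun m ↦ hu (k + m)).aestronglyMeasurable) hF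
    (fun k ↦ huF.mono fun _ hω ↦ abs_ciSup_le fun m ↦ hω (k + m))
    (hlim.mono fun _ ↦ tendsto_ciSup_add_atTop)

end TailSup

section Maker

/-- The finite-horizon (triangular) average `(1/N) ∑_{n < N} H_{N-n}(Tⁿ x)`: the functional applied
at time `n` has the remaining time `N - n` as its horizon, so `H 0` never occurs. It is `0` for
`N = 0`. -/
noncomputable def makerAverage {α E : Type*} [AddCommMonoid E] [Module ℝ E] (T : α → α)
    (H : ℕ → α → E) (N : ℕ) (x : α) : E :=
  (N : ℝ)⁻¹ • ∑ n ∈ Finset.range N, H (N - n) (T^[n] x)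

theorem tendsto_inv_smul_comp_sub {E : Type*} [AddCommMonoid E] [TopologicalSpace E] [Module ℝ E]
    [ContinuousSMul ℝ E] {a : ℕ → E} {L : E} (k : ℕ)
    (ha : Tendsto (fun N : ℕ ↦ (N : ℝ)⁻¹ • a N) atTop (𝓝 L)) :
    Tendsto (fun N : ℕ ↦ (N : ℝ)⁻¹ • a (N - k)) atTop (𝓝 L) := by
  refine (tendsto_add_atTop_iff_nat k).1 ?_
  have hratio := (tendsto_natCast_div_add_atTop (k : ℝ)).smul ha
  rw [one_smul] at hratio
  refine hratio.congr' ?_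
  filter_upwards [eventually_gt_atTop 0] with N hN
  rw [Nat.add_sub_cancel, smul_smul, Nat.cast_add]
  congr 1
  field_simp

section NormBounds

variable {α E : Type*} [NormedAddCommGroup E] [NormedSpace ℝ E] {T : α → α} {D : ℕ → α → E} {x : α}

theorem makerAverage_eq_add_birkhoffAverage (T : α → α) (H : ℕ → α → E) (h : α → E) (N : ℕ)
    (x : α) :
    makerAverage T H N x =
      makerAverage T (fun m ↦ H m - h) N x + birkhoffAverage ℝ T h N x := by
  simp [makerAverage, birkhoffAverage, birkhoffSum, smul_sub]

theorem norm_makerAverage_le {F : α → ℝ} (hF : ∀ n m, ‖D m (T^[n] x)‖ ≤ F (T^[n] x)) (N : ℕ) :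
    ‖makerAverage T D N x‖ ≤ birkhoffAverage ℝ T F N x := by
  rw [makerAverage, norm_smul, norm_inv, RCLike.norm_natCast, birkhoffAverage, smul_eq_mul]
  gcongr
  exact norm_sum_le_of_le _ fun n _ ↦ hF n _

theorem norm_makerAverage_le_tail_add_block {F G : α → ℝ} {k : ℕ}
    (hG : ∀ n m, ‖D (k + m) (T^[n] x)‖ ≤ G (T^[n] x))
    (hF : ∀ n m, ‖D m (T^[n] x)‖ ≤ F (T^[n] x)) (N : ℕ) :
    ‖makerAverage T D N x‖ ≤ (N : ℝ)⁻¹ *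
      (birkhoffSum T G (N - k) x + (birkhoffSum T F N x - birkhoffSum T F (N - k) x)) := by
  have htail : ‖∑ n ∈ Finset.range (N - k), D (N - n) (T^[n] x)‖ ≤ birkhoffSum T G (N - k) x := by
    refine norm_sum_le_of_le _ fun n hn ↦ ?_
    have horizon : N - n = k + (N - k - n) := by
      have := Finset.mem_range.1 hn
      lia
    exact horizon ▸ hG n _
  have hblock : ‖∑ n ∈ Finset.Ico (N - k) N, D (N - n) (T^[n] x)‖ ≤
      birkhoffSum T F N x - birkhoffSum T F (N - k) x := by
    rw [birkhoffSum, birkhoffSum, ← Finset.sum_Ico_eq_sub _ (N.sub_le k)]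
    exact norm_sum_le_of_le _ fun n _ ↦ hF n _
  rw [makerAverage, norm_smul, norm_inv, RCLike.norm_natCast,
    ← Finset.sum_range_add_sum_Ico _ (N.sub_le k)]
  gcongr
  exact norm_add_le_of_le htail hblock

theorem tendsto_makerAverage_zero {G : ℕ → α → ℝ} {β : ℕ → ℝ}
    (hDG : ∀ k n m, ‖D (k + m) (T^[n] x)‖ ≤ G k (T^[n] x))
    (hG : ∀ k, Tendsto (birkhoffAverage ℝ T (G k) · x) atTop (𝓝 (β k)))
    (hβ : Tendsto β atTop (𝓝 0)) : Tendsto (makerAverage T D · x) atTop (𝓝 0) := by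
  refine NormedAddGroup.tendsto_nhds_zero.2 fun ε hε ↦ ?_
  obtain ⟨k, hk⟩ := (hβ.eventually_lt_const hε).exists
  have hbound : Tendsto (fun N : ℕ ↦ (N : ℝ)⁻¹ * (birkhoffSum T (G k) (N - k) x +
      (birkhoffSum T (G 0) N x - birkhoffSum T (G 0) (N - k) x))) atTop (𝓝 (β k)) := by
    simpa [birkhoffAverage, mul_add, mul_sub] using
      (tendsto_inv_smul_comp_sub k (hG k)).add ((hG 0).sub (tendsto_inv_smul_comp_sub k (hG 0)))
  filter_upwards [hbound.eventually_lt_const hk] with N hN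
  refine (norm_makerAverage_le_tail_add_block (hDG k) (fun n m ↦ ?_) N).trans_lt hN
  simpa only [zero_add] using hDG 0 n m

end NormBounds

variable {Ω E : Type*} [MeasurableSpace Ω] {μ : Measure Ω} [NormedAddCommGroup E]
  [NormedSpace ℝ E] {T : Ω → Ω} {H : ℕ → Ω → E} {h : Ω → E} {F : Ω → ℝ}

theorem aestronglyMeasurable_makerAverage (hT : Measure.QuasiMeasurePreserving T μ μ)
    (hH : ∀ m, AEStronglyMeasurable (H m) μ) (N : ℕ) :
    AEStronglyMeasurable (makerAverage T H N) μ :=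
  (Finset.aestronglyMeasurable_fun_sum _ fun n _ ↦
    (hH (N - n)).comp_quasiMeasurePreserving (hT.iterate n)).const_smul _

variable [IsProbabilityMeasure μ]

theorem ae_tendsto_makerAverage_zero (hT : Ergodic T μ)
    (hH : ∀ m, AEStronglyMeasurable (H m) μ) (hF : Integrable F μ)
    (hHF : ∀ᵐ ω ∂μ, ∀ m, ‖H m ω‖ ≤ F ω) (hlim : ∀ᵐ ω ∂μ, Tendsto (H · ω) atTop (𝓝 0)) :
    ∀ᵐ ω ∂μ, Tendsto (makerAverage T H · ω) atTop (𝓝 0) := by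
  set G : ℕ → Ω → ℝ := fun k ω ↦ ⨆ m, ‖H (k + m) ω‖
  have hnorm (m : ℕ) : AEMeasurable (fun ω ↦ ‖H m ω‖) μ := (hH m).norm.aemeasurable
  have hdom : ∀ᵐ ω ∂μ, ∀ m, |‖H m ω‖| ≤ F ω := by simpa only [abs_norm] using hHF
  have hGint (k : ℕ) : Integrable (G k) μ := integrable_ciSup_of_abs_le
    (fun m ↦ hnorm (k + m)) hF (hdom.mono fun _ hω m ↦ hω (k + m))
  have hGzero : Tendsto (fun k ↦ ∫ ω, G k ω ∂μ) atTop (𝓝 0) := by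
    simpa using tendsto_integral_ciSup_add_atTop hnorm hF hdom
      (hlim.mono fun _ ↦ tendsto_zero_iff_norm_tendsto_zero.1)
  filter_upwards [ae_all_iff.2 fun k ↦ ae_tendsto_birkhoffAverage hT (hGint k),
    ae_forall_iterate hT.quasiMeasurePreserving hHF] with ω hbirkhoff horbit
  exact tendsto_makerAverage_zero (fun k n ↦ le_ciSup (f := fun m ↦ ‖H (k + m) (T^[n] ω)‖)
    ⟨F (T^[n] ω), Set.forall_mem_range.2 fun m ↦ horbit n (k + m)⟩) hbirkhoff hGzero

theorem ae_tendsto_makerAverage [CompleteSpace E] (hT : Ergodic T μ)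
    (hH : ∀ m, AEStronglyMeasurable (H m) μ) (hF : Integrable F μ)
    (hHF : ∀ᵐ ω ∂μ, ∀ m, ‖H m ω‖ ≤ F ω) (hlim : ∀ᵐ ω ∂μ, Tendsto (H · ω) atTop (𝓝 (h ω))) :
    ∀ᵐ ω ∂μ, Tendsto (makerAverage T H · ω) atTop (𝓝 (∫ x, h x ∂μ)) := by
  have hh : AEStronglyMeasurable h μ := aestronglyMeasurable_of_tendsto_ae atTop hH hlim
  have hhF : ∀ᵐ ω ∂μ, ‖h ω‖ ≤ F ω := by
    filter_upwards [hHF, hlim] with ω hω hωlim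
    exact le_of_tendsto' hωlim.norm hω
  have hdiff := ae_tendsto_makerAverage_zero (H := fun m ↦ H m - h) hT (fun m ↦ (hH m).sub hh)
    (hF.add hF) (by filter_upwards [hHF, hhF] with ω hω hωh m using norm_sub_le_of_le (hω m) hωh)
    (hlim.mono fun _ ↦ tendsto_sub_nhds_zero_iff.2)
  filter_upwards [hdiff, ae_tendsto_birkhoffAverage hT (hF.mono' hh hhF)] with ω hω hωh
  simpa only [makerAverage_eq_add_birkhoffAverage T H h, zero_add] using hω.add hωh

theorem maker_ergodic_theorem_general [CompleteSpace E] {p : ℝ≥0∞} (hp : 1 ≤ p) (hp' : p ≠ ∞)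
    (hT : Ergodic T μ) (hH : ∀ m, AEStronglyMeasurable (H m) μ) (hF : MemLp F p μ)
    (hHF : ∀ᵐ ω ∂μ, ∀ m, ‖H m ω‖ ≤ F ω) (hlim : ∀ᵐ ω ∂μ, Tendsto (H · ω) atTop (𝓝 (h ω))) :
    (∀ᵐ ω ∂μ, Tendsto (makerAverage T H · ω) atTop (𝓝 (∫ x, h x ∂μ))) ∧
      Tendsto (fun N ↦ eLpNorm (fun ω ↦ makerAverage T H N ω - ∫ x, h x ∂μ) p μ)
        atTop (𝓝 0) := by
  have hae := ae_tendsto_makerAverage hT hH (hF.integrable hp) hHF hlim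
  refine ⟨hae, tendsto_Lp_finite_of_tendsto_ae hp hp'
    (aestronglyMeasurable_makerAverage hT.quasiMeasurePreserving hH) (memLp_const _) ?_ hae⟩
  refine unifIntegrable_of_norm_le
    (unifIntegrable_birkhoffAverage hT.toMeasurePreserving hp hp' hF) fun N ↦ ?_
  filter_upwards [ae_forall_iterate hT.quasiMeasurePreserving hHF] with ω hω
  exact (norm_makerAverage_le hω N).trans (le_abs_self _)

end Maker

/-- **Maker's ergodic theorem for finite-horizon (triangular) averages.**
Let `T` be an ergodic measure-preserving transformation of a probability space `(Ω, μ)`,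
and let `h, (h_m)_{m ∈ ℕ}` be measurable with `h_m → h` a.e. and `sup_m |h_m|` integrable
(and a.e. finite).  Then `(1/N) ∑_{n=0}^{N-1} h_{N-n}(T^n ω) → ∫ h dμ` for a.e. `ω`, with
convergence also in `L¹(μ)`. -/
theorem maker_ergodic_theorem {Ω : Type*} [MeasurableSpace Ω] (μ : Measure Ω)
    [IsProbabilityMeasure μ] (T : Ω → Ω) (hT : Ergodic T μ)
    (h : Ω → ℝ) (H : ℕ → Ω → ℝ)
    (h_meas : Measurable h) (H_meas : ∀ m, Measurable (H m))
    (h_lim : ∀ᵐ ω ∂μ, Tendsto (fun m => H m ω) atTop (𝓝 (h ω)))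
    (h_bdd : ∀ᵐ ω ∂μ, BddAbove (Set.range fun m => |H m ω|))
    (h_int : Integrable (fun ω => ⨆ m, |H m ω|) μ) :
    (∀ᵐ ω ∂μ,
      Tendsto (fun N : ℕ => (N : ℝ)⁻¹ * ∑ n ∈ Finset.range N, H (N - n) (T^[n] ω))
        atTop (𝓝 (∫ x, h x ∂μ))) ∧
    Tendsto
      (fun N : ℕ => ∫ ω,
        |(N : ℝ)⁻¹ * ∑ n ∈ Finset.range N, H (N - n) (T^[n] ω) - ∫ x, h x ∂μ| ∂μ)
      atTop (𝓝 0) := by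
  have h_dom : ∀ᵐ ω ∂μ, ∀ m, ‖H m ω‖ ≤ ⨆ m, |H m ω| := h_bdd.mono fun _ hω m ↦ le_ciSup hω m
  have H_aesm (m : ℕ) : AEStronglyMeasurable (H m) μ := (H_meas m).aestronglyMeasurable
  obtain ⟨hae, hL1⟩ := maker_ergodic_theorem_general le_rfl ENNReal.one_ne_top hT H_aesm
    (memLp_one_iff_integrable.2 h_int) h_dom h_lim
  exact ⟨hae, tendsto_integral_norm_of_tendsto_eLpNorm_one (fun N ↦
    (aestronglyMeasurable_makerAverage hT.quasiMeasurePreserving H_aesm N).sub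
      aestronglyMeasurable_const) hL1⟩
end

section
/- Fix x, y ∈ ℝ and σ > 0. Let X° be a random variable with Gaussian law N(x, σ²) and let ε be uniform on [0,1], independent of X°. Let φ denote the standard normal density and define Y° = X° if ε ≤ φ((X° − y)/σ)/φ((X° − x)/σ), and Y° = x + y − X° otherwise. Then Y° has Gaussian law N(y, σ²). -/
open ProbabilityTheory MeasureTheory

/-- The standard normal density `φ(t) = (2π)^{-1/2} exp(-t²/2)`. -/
noncomputable def stdNormalPDF (t : ℝ) : ℝ :=
  Real.exp (-t ^ 2 / 2) / Real.sqrt (2 * Real.pi)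

/-!
Accepting a draw `X°` from the density `p` with probability `min 1 (q / p)` leaves a kept part
of density `min p q` and a rejected part of density `p - q` (truncated at `0`). A map `T` that
preserves the reference measure and exchanges `p` and `q` moves the rejected part to density
`q - p`, and `min p q + (q - p) = q`. The reflection `u ↦ x + y - u` exchanges the two Gaussian
densities because `φ` is even. The junk value `q / 0 = 0` of the ratio is harmless: `X°` almost
surely avoids the zeros of `p`.
-/

section Randomization

variable {α β γ : Type*} [MeasurableSpace α] [MeasurableSpace β] [MeasurableSpace γ]

lemma map_ite_eq_map_restrict_add (μ : Measure α) {P : α → Prop} [DecidablePred P]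
    (hP : MeasurableSet {a | P a}) {f g : α → γ} (hf : Measurable f) (hg : Measurable g) :
    μ.map (fun a ↦ if P a then f a else g a) =
      (μ.restrict {a | P a}).map f + (μ.restrict {a | ¬ P a}).map g := by
  have hite : Measurable fun a ↦ if P a then f a else g a := hf.ite hP hg
  conv_lhs => rw [← Measure.restrict_add_restrict_compl (μ := μ) hP, Measure.map_add _ _ hite]
  congr 1
  · exact Measure.map_congr <| (ae_restrict_mem hP).mono fun a (ha : P a) ↦ if_pos ha
  · exact Measure.map_congr <| (ae_restrict_mem hP.compl).mono fun a (ha : ¬ P a) ↦ if_neg ha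

lemma fst_restrict_prod (μ : Measure α) (ν : Measure β) [SFinite ν] {s : Set (α × β)}
    (hs : MeasurableSet s) :
    ((μ.prod ν).restrict s).fst = μ.withDensity fun a ↦ ν (Prod.mk a ⁻¹' s) := by
  ext t ht
  rw [Measure.fst_apply ht, Measure.restrict_apply (measurable_fst ht),
    Measure.prod_apply ((measurable_fst ht).inter hs), withDensity_apply _ ht,
    ← lintegral_indicator ht]
  refine lintegral_congr fun a ↦ ?_
  by_cases ha : a ∈ t <;> simp [ha, Set.preimage_preimage]

lemma map_prod_ite_eq_map_withDensity_add (μ : Measure α) (ν : Measure β) [SFinite ν]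
    {P : α × β → Prop} [DecidablePred P] (hP : MeasurableSet {z | P z}) {f g : α → γ}
    (hf : Measurable f) (hg : Measurable g) :
    (μ.prod ν).map (fun z ↦ if P z then f z.1 else g z.1) =
      (μ.withDensity fun a ↦ ν {b | P (a, b)}).map f +
        (μ.withDensity fun a ↦ ν {b | ¬ P (a, b)}).map g := by
  have hite := map_ite_eq_map_restrict_add (μ.prod ν) hP (hf.comp measurable_fst)
    (hg.comp measurable_fst)
  rw [← Measure.map_map hf measurable_fst, ← Measure.map_map hg measurable_fst] at hite
  refine hite.trans ?_
  congr 2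
  · exact fst_restrict_prod μ ν hP
  · exact fst_restrict_prod μ ν hP.compl

end Randomization

section UniformThreshold

lemma volume_restrict_Icc_zero_one_Iic (r : ℝ) :
    volume.restrict (Set.Icc (0 : ℝ) 1) (Set.Iic r) = min 1 (ENNReal.ofReal r) := by
  have hinter : Set.Iic r ∩ Set.Icc 0 1 = Set.Icc 0 (min 1 r) := by grind
  rw [Measure.restrict_apply measurableSet_Iic, hinter, Real.volume_Icc, sub_zero,
    ENNReal.ofReal_min, ENNReal.ofReal_one]

lemma volume_restrict_Icc_zero_one_Ioi (r : ℝ) :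
    volume.restrict (Set.Icc (0 : ℝ) 1) (Set.Ioi r) = 1 - ENNReal.ofReal r := by
  have : IsProbabilityMeasure (volume.restrict (Set.Icc (0 : ℝ) 1)) := ⟨by simp⟩
  rw [← Set.compl_Iic, prob_compl_eq_one_sub measurableSet_Iic, volume_restrict_Icc_zero_one_Iic]
  exact tsub_min

lemma map_prod_uniform_ite_le {α γ : Type*} [MeasurableSpace α] [MeasurableSpace γ]
    (μ : Measure α) {r : α → ℝ} (hr : Measurable r) {f g : α → γ} (hf : Measurable f)
    (hg : Measurable g) :
    (μ.prod (volume.restrict (Set.Icc (0 : ℝ) 1))).map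
        (fun z ↦ if z.2 ≤ r z.1 then f z.1 else g z.1) =
      (μ.withDensity fun a ↦ min 1 (ENNReal.ofReal (r a))).map f +
        (μ.withDensity fun a ↦ 1 - ENNReal.ofReal (r a)).map g := by
  have hthreshold : MeasurableSet {z : α × ℝ | z.2 ≤ r z.1} :=
    measurableSet_le measurable_snd (hr.comp measurable_fst)
  rw [map_prod_ite_eq_map_withDensity_add μ _ hthreshold hf hg]
  simp only [not_le, ← volume_restrict_Icc_zero_one_Iic, ← volume_restrict_Icc_zero_one_Ioi]
  rfl

end UniformThreshold

section AcceptReject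

lemma ofReal_mul_min_one_ofReal_div (a b : ℝ) :
    ENNReal.ofReal a * min 1 (ENNReal.ofReal (b / a)) =
      min (ENNReal.ofReal a) (ENNReal.ofReal b) := by
  rcases le_or_gt a 0 with ha | ha
  · simp [ENNReal.ofReal_of_nonpos ha]
  · rw [mul_min, mul_one, ← ENNReal.ofReal_mul ha.le, mul_div_cancel₀ _ ha.ne']

lemma ofReal_mul_one_sub_ofReal_div (a b : ℝ) :
    ENNReal.ofReal a * (1 - ENNReal.ofReal (b / a)) = ENNReal.ofReal a - ENNReal.ofReal b := by
  rcases le_or_gt a 0 with ha | ha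
  · simp [ENNReal.ofReal_of_nonpos ha]
  · rw [ENNReal.mul_sub fun _ _ ↦ ENNReal.ofReal_ne_top, mul_one, ← ENNReal.ofReal_mul ha.le,
      mul_div_cancel₀ _ ha.ne']

variable {α : Type*} [MeasurableSpace α] {μ : Measure α}

lemma withDensity_withDensity_min_one_div {p q : α → ℝ} (hp : Measurable p) (hq : Measurable q) :
    (μ.withDensity fun u ↦ ENNReal.ofReal (p u)).withDensity
        (fun u ↦ min 1 (ENNReal.ofReal (q u / p u))) =
      μ.withDensity fun u ↦ min (ENNReal.ofReal (p u)) (ENNReal.ofReal (q u)) := by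
  rw [← withDensity_mul μ (by fun_prop) (by fun_prop)]
  exact congrArg μ.withDensity (funext fun u ↦ ofReal_mul_min_one_ofReal_div (p u) (q u))

lemma withDensity_withDensity_one_sub_div {p q : α → ℝ} (hp : Measurable p) (hq : Measurable q) :
    (μ.withDensity fun u ↦ ENNReal.ofReal (p u)).withDensity
        (fun u ↦ 1 - ENNReal.ofReal (q u / p u)) =
      μ.withDensity fun u ↦ ENNReal.ofReal (p u) - ENNReal.ofReal (q u) := by
  rw [← withDensity_mul μ (by fun_prop) (by fun_prop)]
  exact congrArg μ.withDensity (funext fun u ↦ ofReal_mul_one_sub_ofReal_div (p u) (q u))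

lemma withDensity_min_add_withDensity_sub {P Q : α → ENNReal} (hP : Measurable P)
    (hQ : Measurable Q) :
    (μ.withDensity fun u ↦ min (P u) (Q u)) + (μ.withDensity fun u ↦ Q u - P u) =
      μ.withDensity Q := by
  rw [← withDensity_add_left (hP.min hQ)]
  congr 1 with u
  rw [Pi.add_apply, add_comm, min_comm, tsub_add_min]

lemma map_withDensity_comp {β : Type*} [MeasurableSpace β] {ν : Measure β} {T : α → β}
    (hT : MeasurePreserving T μ ν) {h : β → ENNReal} (hh : Measurable h) :
    (μ.withDensity fun u ↦ h (T u)).map T = ν.withDensity h := by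
  ext s hs
  rw [Measure.map_apply hT.measurable hs, withDensity_apply _ (hT.measurable hs),
    withDensity_apply _ hs]
  exact hT.setLIntegral_comp_preimage hs hh

theorem reflection_coupling_marginal_general {T : α → α} (hT : MeasurePreserving T μ μ)
    {p q : α → ℝ} (hp : Measurable p) (hpq : p ∘ T = q) (hqp : q ∘ T = p) :
    ((μ.withDensity fun u ↦ ENNReal.ofReal (p u)).prod
        (volume.restrict (Set.Icc (0 : ℝ) 1))).map
        (fun z ↦ if z.2 ≤ q z.1 / p z.1 then z.1 else T z.1) =
      μ.withDensity fun u ↦ ENNReal.ofReal (q u) := by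
  have hq : Measurable q := hpq ▸ hp.comp hT.measurable
  let P u := ENNReal.ofReal (p u)
  let Q u := ENNReal.ofReal (q u)
  have hP : Measurable P := hp.ennreal_ofReal
  have hQ : Measurable Q := hq.ennreal_ofReal
  have hratio : Measurable fun u ↦ q u / p u := hq.div hp
  have hrejected : Measurable fun u ↦ Q u - P u := hQ.sub hP
  have exchange : (fun u ↦ P u - Q u) = fun u ↦ Q (T u) - P (T u) := by
    funext u
    simp only [P, Q, ← congrFun hpq u, ← congrFun hqp u, Function.comp_apply]
  calc
    _ = (μ.withDensity fun u ↦ min (P u) (Q u)) + (μ.withDensity fun u ↦ P u - Q u).map T := by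
      rw [← withDensity_withDensity_min_one_div hp hq, ← withDensity_withDensity_one_sub_div hp hq]
      simpa only [id, Measure.map_id] using
        map_prod_uniform_ite_le (μ.withDensity P) hratio measurable_id hT.measurable
    _ = (μ.withDensity fun u ↦ min (P u) (Q u)) + μ.withDensity fun u ↦ Q u - P u := by
      rw [exchange, map_withDensity_comp hT hrejected]
    _ = μ.withDensity Q := withDensity_min_add_withDensity_sub hP hQ

end AcceptReject

section Gaussian

@[fun_prop]
lemma measurable_stdNormalPDF : Measurable stdNormalPDF := by
  unfold stdNormalPDF
  fun_prop

lemma stdNormalPDF_neg (t : ℝ) : stdNormalPDF (-t) = stdNormalPDF t := by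
  simp [stdNormalPDF]

lemma gaussianPDFReal_eq_stdNormalPDF_div (m : ℝ) {σ : ℝ} (hσ : 0 < σ) (u : ℝ) :
    gaussianPDFReal m ⟨σ ^ 2, sq_nonneg σ⟩ u = stdNormalPDF ((u - m) / σ) / σ := by
  have hsqrt : √(2 * Real.pi * σ ^ 2) = √(2 * Real.pi) * σ := by
    rw [Real.sqrt_mul (by positivity), Real.sqrt_sq hσ.le]
  have hexponent : -(u - m) ^ 2 / (2 * σ ^ 2) = -((u - m) / σ) ^ 2 / 2 := by
    field_simp
  change (√(2 * Real.pi * σ ^ 2))⁻¹ * Real.exp (-(u - m) ^ 2 / (2 * σ ^ 2)) = _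
  rw [stdNormalPDF, hsqrt, hexponent]
  field_simp

lemma gaussianReal_eq_withDensity_stdNormalPDF (m : ℝ) {σ : ℝ} (hσ : 0 < σ) :
    gaussianReal m ⟨σ ^ 2, sq_nonneg σ⟩ =
      volume.withDensity fun u ↦ ENNReal.ofReal (stdNormalPDF ((u - m) / σ) / σ) := by
  have hvar : (⟨σ ^ 2, sq_nonneg σ⟩ : NNReal) ≠ 0 :=
    fun h ↦ (pow_pos hσ 2).ne' (congrArg NNReal.toReal h)
  rw [gaussianReal_of_var_ne_zero m hvar]
  simp only [← gaussianPDFReal_eq_stdNormalPDF_div m hσ]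
  rfl

lemma stdNormalPDF_div_comp_reflection (x y σ : ℝ) :
    (fun u ↦ stdNormalPDF ((u - x) / σ) / σ) ∘ (fun u ↦ x + y - u) =
      fun u ↦ stdNormalPDF ((u - y) / σ) / σ := by
  funext u
  rw [Function.comp_apply, ← stdNormalPDF_neg]
  ring_nf

end Gaussian

/-- **The reflection coupling preserves the second marginal.**
Fix `x, y ∈ ℝ` and `σ > 0`.  If `X° ~ N(x, σ²)` and `ε ~ Unif[0,1]` are independent
(modelled by the product measure), and
`Y° = X°` if `ε ≤ φ((X°−y)/σ)/φ((X°−x)/σ)` and `Y° = x + y − X°` otherwise,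
then `Y° ~ N(y, σ²)`. -/
theorem reflection_coupling_marginal (x y σ : ℝ) (hσ : 0 < σ) :
    Measure.map
      (fun p : ℝ × ℝ =>
        if p.2 ≤ stdNormalPDF ((p.1 - y) / σ) / stdNormalPDF ((p.1 - x) / σ) then p.1
        else x + y - p.1)
      ((gaussianReal x ⟨σ ^ 2, sq_nonneg σ⟩).prod (volume.restrict (Set.Icc (0 : ℝ) 1))) =
    gaussianReal y ⟨σ ^ 2, sq_nonneg σ⟩ := by
  rw [gaussianReal_eq_withDensity_stdNormalPDF x hσ, gaussianReal_eq_withDensity_stdNormalPDF y hσ]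
  simpa only [div_div_div_cancel_right₀ hσ.ne'] using
    reflection_coupling_marginal_general (Measure.measurePreserving_sub_left volume (x + y))
      (by fun_prop) (stdNormalPDF_div_comp_reflection x y σ)
      (add_comm y x ▸ stdNormalPDF_div_comp_reflection y x σ)
end
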